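/- Let N ≥ 0 and for each h ∈ {0, 1, …, N} let H^{(h)}_1, …, H^{(h)}_{m_h} be a nonempty family of pairwise commuting orthogonal projections on a finite-dimensional complex inner product space. Let H = ∑_{h=0}^{N} ∑_{j=1}^{m_h} H^{(h)}_j and m_max = max_{0 ≤ h ≤ N} m_h. Then for every unit vector ψ, 1 − ⟨ψ, Hψ⟩/(N+1) ≤ (1/(N+1)) ∑_{h=0}^{N} ⟨ψ, ∏_{j=1}^{m_h} (I − H^{(h)}_j) ψ⟩ ≤ 1 − ⟨ψ, Hψ⟩/(m_max·(N+1)). -/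

import Mathlib

namespace IsStarProjection

variable {R : Type*} [Ring R] [StarRing R]

theorem list_prod {l : List R} (hl : ∀ p ∈ l, IsStarProjection p)
    (hc : ∀ p ∈ l, ∀ q ∈ l, Commute p q) : IsStarProjection l.prod := by
  induction l with
  | nil => simp
  | cons p l ih =>
    simp only [List.forall_mem_cons] at hl hc
    rw [List.prod_cons]
    exact hl.1.mul (ih hl.2 fun a ha b hb => (hc.2 a ha).2 b hb)
      (Commute.list_prod_right _ _ hc.1.2)

variable [PartialOrder R] [StarOrderedRing R]

theorem mul_le_left {p q : R} (hp : IsStarProjection p) (hq : IsStarProjection q)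
    (hc : Commute p q) : p * q ≤ p := by
  have h := (hp.mul hq.one_sub ((Commute.one_right p).sub_right hc)).nonneg
  rwa [mul_sub, mul_one, sub_nonneg] at h

theorem list_prod_le {l : List R} (hl : ∀ p ∈ l, IsStarProjection p)
    (hc : ∀ p ∈ l, ∀ q ∈ l, Commute p q) {p : R} (hp : p ∈ l) : l.prod ≤ p := by
  induction l with
  | nil => simp at hp
  | cons a l ih =>
    simp only [List.forall_mem_cons] at hl hc
    have hcl : ∀ p ∈ l, ∀ q ∈ l, Commute p q := fun a ha b hb => (hc.2 a ha).2 b hb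
    have hl' := list_prod hl.2 hcl
    have hac : Commute a l.prod := Commute.list_prod_right _ _ hc.1.2
    rw [List.prod_cons]
    rcases List.mem_cons.1 hp with rfl | hp
    · exact hl.1.mul_le_left hl' hac
    · rw [hac.eq]
      exact (hl'.mul_le_left hl.1 hac.symm).trans (ih hl.2 hcl hp)

/-- The union bound for commuting projections. -/
theorem one_sub_sum_le_list_prod {l : List R} (hl : ∀ p ∈ l, IsStarProjection p)
    (hc : ∀ p ∈ l, ∀ q ∈ l, Commute p q) : 1 - (l.map (1 - ·)).sum ≤ l.prod := by
  induction l with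
  | nil => simp
  | cons a l ih =>
    simp only [List.forall_mem_cons] at hl hc
    have hcl : ∀ p ∈ l, ∀ q ∈ l, Commute p q := fun a ha b hb => (hc.2 a ha).2 b hb
    have hac : Commute a l.prod := Commute.list_prod_right _ _ hc.1.2
    have h := hl.1.one_sub.mul_le_left (list_prod hl.2 hcl)
      ((Commute.one_left _).sub_left hac)
    rw [sub_mul, one_mul, sub_le_iff_le_add] at h
    rw [List.map_cons, List.sum_cons, List.prod_cons, ← sub_sub, sub_right_comm,
      sub_le_iff_le_add, add_comm]
    exact (ih hl.2 hcl).trans h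

end IsStarProjection

namespace Matrix

variable {I : Type*} [Fintype I]

/-- The real part of the quadratic form `⟨ψ, A ψ⟩`, as an additive map in `A`. -/
noncomputable def reQuadraticForm (ψ : I → ℂ) : Matrix I I ℂ →+ ℝ where
  toFun A := (star ψ ⬝ᵥ (A *ᵥ ψ)).re
  map_zero' := by simp
  map_add' A B := by simp [add_mulVec, dotProduct_add]

open scoped MatrixOrder in
theorem reQuadraticForm_mono (ψ : I → ℂ) : Monotone (reQuadraticForm ψ) := by
  intro A B h
  rw [← sub_nonneg, ← map_sub]
  exact (Matrix.le_iff.1 h).re_dotProduct_nonneg ψ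

variable [DecidableEq I]

open scoped MatrixOrder in
/-- Bounds on the expectation of a product of complements of commuting projections. -/
theorem reQuadraticForm_prod_one_sub_bounds {n M : ℕ} (hnM : n ≤ M) (T : Fin n → Matrix I I ℂ)
    (hT : ∀ j, IsStarProjection (T j)) (hcomm : ∀ i j, Commute (T i) (T j)) (ψ : I → ℂ) :
    reQuadraticForm ψ 1 - reQuadraticForm ψ (∑ j, T j) ≤
        reQuadraticForm ψ (List.ofFn fun j => 1 - T j).prod ∧
      reQuadraticForm ψ (∑ j, T j) ≤
        M * (reQuadraticForm ψ 1 - reQuadraticForm ψ (List.ofFn fun j => 1 - T j).prod) := by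
  have hl : ∀ p ∈ List.ofFn fun j => 1 - T j, IsStarProjection p := by
    simpa [List.forall_mem_ofFn_iff] using fun j => (hT j).one_sub
  have hc : ∀ p ∈ List.ofFn fun j => 1 - T j, ∀ q ∈ List.ofFn fun j => 1 - T j,
      Commute p q := by
    simp only [List.forall_mem_ofFn_iff]
    exact fun i j => (Commute.one_left _).sub_left ((Commute.one_right _).sub_right (hcomm i j))
  constructor
  · have h := reQuadraticForm_mono ψ (IsStarProjection.one_sub_sum_le_list_prod hl hc)
    simpa [List.map_ofFn, List.sum_ofFn, Function.comp_def] using h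
  · have h : ∀ j, reQuadraticForm ψ (T j) ≤
        reQuadraticForm ψ 1 - reQuadraticForm ψ (List.ofFn fun j => 1 - T j).prod := fun j => by
      have := reQuadraticForm_mono ψ
        (IsStarProjection.list_prod_le hl hc (List.mem_ofFn.2 ⟨j, rfl⟩))
      rw [map_sub] at this
      linarith
    have hnonneg : 0 ≤ reQuadraticForm ψ 1 -
        reQuadraticForm ψ (List.ofFn fun j => 1 - T j).prod := by
      have := reQuadraticForm_mono ψ (IsStarProjection.list_prod hl hc).one_sub.nonneg
      rwa [map_zero, map_sub] at this
    rw [map_sum]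
    refine (Finset.sum_le_card_nsmul _ _ _ fun j _ => h j).trans ?_
    rw [Finset.card_univ, Fintype.card_fin, nsmul_eq_mul]
    gcongr

end Matrix


open Matrix

/-- for `N + 1` nonempty groups of pairwise commuting orthogonal
projections `H^{(h)}_j` (`h = 0, …, N`, `j = 1, …, m_h`), with
`H = ∑_h ∑_j H^{(h)}_j` and `m_max = max_h m_h`, every unit vector `ψ` satisfies
`1 − ⟨ψ,Hψ⟩/(N+1) ≤ (1/(N+1)) ∑_h ⟨ψ, ∏_j (I − H^{(h)}_j) ψ⟩
  ≤ 1 − ⟨ψ,Hψ⟩/(m_max·(N+1))`. -/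
theorem stmt_13 {I : Type*} [Fintype I] [DecidableEq I] (N : ℕ)
    (m : Fin (N + 1) → ℕ) (hm : ∀ h, 1 ≤ m h)
    (T : (h : Fin (N + 1)) → Fin (m h) → Matrix I I ℂ)
    (hherm : ∀ h j, (T h j).IsHermitian)
    (hidem : ∀ h j, T h j * T h j = T h j)
    (hcomm : ∀ h j j', Commute (T h j) (T h j'))
    (ψ : I → ℂ) (hψ : star ψ ⬝ᵥ ψ = 1) :
    1 - (star ψ ⬝ᵥ ((∑ h, ∑ j, T h j) *ᵥ ψ)).re / (N + 1) ≤
        (1 / (N + 1 : ℝ)) *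
          ∑ h, (star ψ ⬝ᵥ ((List.ofFn fun j => (1 : Matrix I I ℂ) - T h j).prod *ᵥ ψ)).re ∧
      (1 / (N + 1 : ℝ)) *
          ∑ h, (star ψ ⬝ᵥ ((List.ofFn fun j => (1 : Matrix I I ℂ) - T h j).prod *ᵥ ψ)).re ≤
        1 - (star ψ ⬝ᵥ ((∑ h, ∑ j, T h j) *ᵥ ψ)).re /
          (((Finset.univ.sup m : ℕ) : ℝ) * (N + 1)) := by
  change 1 - reQuadraticForm ψ _ / _ ≤ _ * ∑ h, reQuadraticForm ψ _ ∧
    _ * ∑ h, reQuadraticForm ψ _ ≤ 1 - reQuadraticForm ψ _ / _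
  have hone : reQuadraticForm ψ 1 = 1 := by simp [reQuadraticForm, hψ]
  have hbounds h := reQuadraticForm_prod_one_sub_bounds
    (Finset.le_sup (f := m) (Finset.mem_univ h)) (T h)
    (fun j => ⟨hidem h j, hherm h j⟩) (hcomm h) ψ
  simp only [hone] at hbounds
  have hN : (0 : ℝ) < N + 1 := by positivity
  rw [map_sum (reQuadraticForm ψ) (fun h => ∑ j, T h j)]
  constructor
  · have := Finset.sum_le_sum fun h (_ : h ∈ Finset.univ) => (hbounds h).1
    simp only [Finset.sum_sub_distrib, Finset.sum_const, Finset.card_univ, Fintype.card_fin,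
      nsmul_eq_mul, Nat.cast_add, Nat.cast_one, mul_one] at this
    rw [one_div_mul_eq_div, one_sub_div hN.ne']
    gcongr
  · have hM : (0 : ℝ) < (Finset.univ.sup m : ℕ) := by
      exact_mod_cast (hm 0).trans (Finset.le_sup (Finset.mem_univ 0))
    have := Finset.sum_le_sum fun h (_ : h ∈ Finset.univ) => (hbounds h).2
    simp only [← Finset.mul_sum, Finset.sum_sub_distrib, Finset.sum_const, Finset.card_univ,
      Fintype.card_fin, nsmul_eq_mul, Nat.cast_add, Nat.cast_one, mul_one] at this
    rw [one_div_mul_eq_div, le_sub_comm, one_sub_div hN.ne', ← div_div]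
    gcongr
    rwa [div_le_iff₀' hM]
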